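/- Let 𝒜 be a weak alternating automaton over an alphabet A and q a state of 𝒜. For every ω-word u : ℕ → A and every i ∈ ℕ, the suffix u[i,ω) is accepted from q by 𝒜 if and only if u[i,ω) is not accepted from q by the complementary automaton 𝒜̄. -/

import Mathlib

/-!
Statement 0: For a weak alternating automaton 𝒜 over alphabet `A` and a state `q`,
for every ω-word `u : ℕ → A` and every `i : ℕ`, the suffix `u[i,ω)` is accepted from `q`
by 𝒜 iff it is not accepted from `q` by the complementary automaton.
-/

/-- Transition conditions over state set `Q` and alphabet `A`: built from atoms `B ⊆ A`
and `○q` for `q ∈ Q` using disjunction and conjunction. -/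
inductive TCond (Q : Type*) (A : Type*) : Type _ where
  | atom : Set A → TCond Q A
  | next : Q → TCond Q A
  | or   : TCond Q A → TCond Q A → TCond Q A
  | and  : TCond Q A → TCond Q A → TCond Q A

namespace TCond

/-- `○q` occurs in the transition condition. -/
def NextOccurs {Q A : Type*} : TCond Q A → Q → Prop
  | atom _, _ => False
  | next q', q => q' = q
  | or τ₀ τ₁, q => τ₀.NextOccurs q ∨ τ₁.NextOccurs q
  | and τ₀ τ₁, q => τ₀.NextOccurs q ∨ τ₁.NextOccurs q

/-- The subformula relation on transition conditions. -/
inductive Subf {Q A : Type*} : TCond Q A → TCond Q A → Prop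
  | refl (τ : TCond Q A) : Subf τ τ
  | orL {χ τ₀ τ₁} : Subf χ τ₀ → Subf χ (or τ₀ τ₁)
  | orR {χ τ₀ τ₁} : Subf χ τ₁ → Subf χ (or τ₀ τ₁)
  | andL {χ τ₀ τ₁} : Subf χ τ₀ → Subf χ (and τ₀ τ₁)
  | andR {χ τ₀ τ₁} : Subf χ τ₁ → Subf χ (and τ₀ τ₁)

/-- The complementary (dual) transition condition: atoms `B` are replaced by `A ∖ B`,
`○q` is unchanged, and `∨`/`∧` are exchanged. -/
def dual {Q A : Type*} : TCond Q A → TCond Q A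
  | atom B => atom Bᶜ
  | next q => next q
  | or τ₀ τ₁ => and τ₀.dual τ₁.dual
  | and τ₀ τ₁ => or τ₀.dual τ₁.dual

theorem dual_nextOccurs {Q A : Type*} (τ : TCond Q A) (q : Q) :
    τ.dual.NextOccurs q ↔ τ.NextOccurs q := by
  induction τ <;> simp [dual, NextOccurs, *]

end TCond

/-- A weak alternating automaton over the alphabet `A` with state set `Q`:
a transition function `δ` and a partition of the states into recurring states
(the set `recurring`) and non-recurring states (its complement), such that any two states
in the same strongly connected component of the transition graph are both recurring or
both non-recurring. -/
structure WAA (Q : Type*) (A : Type*) where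
  δ : Q → TCond Q A
  recurring : Set Q
  weak : ∀ q q',
    Relation.ReflTransGen (fun x y => (δ x).NextOccurs y) q q' →
    Relation.ReflTransGen (fun x y => (δ x).NextOccurs y) q' q →
    (q ∈ recurring ↔ q' ∈ recurring)

namespace WAA

variable {Q A : Type*}

/-- The edge relation of the transition graph of a weak alternating automaton. -/
def Edge (M : WAA Q A) (q q' : Q) : Prop := (M.δ q).NextOccurs q'

/-- Vertices of run graphs: pairs of a position and either a state or a transition
condition. -/
abbrev Vert (Q A : Type*) := ℕ × (Q ⊕ TCond Q A)

/-- A run graph of a weak alternating automaton on an ω-word `u`. -/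
structure RunGraph (M : WAA Q A) (u : ℕ → A) where
  V : Set (Vert Q A)
  E : Vert Q A → Vert Q A → Prop
  edge_mem : ∀ ⦃v w⦄, E v w → v ∈ V ∧ w ∈ V
  /-- every transition-condition vertex carries a subformula of some `δ q` -/
  cond_subf : ∀ i τ, (i, Sum.inr τ) ∈ V → ∃ q, TCond.Subf τ (M.δ q)
  /-- a state vertex has exactly one outgoing edge, to `⟨i, δ q⟩` -/
  state_succ : ∀ i q, (i, Sum.inl q) ∈ V →
    ∀ w, E (i, Sum.inl q) w ↔ w = (i, Sum.inr (M.δ q))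
  /-- a `○q` vertex has exactly one outgoing edge, to `⟨i+1, q⟩` -/
  next_succ : ∀ i q, (i, Sum.inr (TCond.next q)) ∈ V →
    ∀ w, E (i, Sum.inr (TCond.next q)) w ↔ w = (i + 1, Sum.inl q)
  /-- a disjunction vertex has outgoing edges only to the disjuncts, and at least one -/
  or_succ_subset : ∀ i τ₀ τ₁, (i, Sum.inr (TCond.or τ₀ τ₁)) ∈ V →
    ∀ w, E (i, Sum.inr (TCond.or τ₀ τ₁)) w → w = (i, Sum.inr τ₀) ∨ w = (i, Sum.inr τ₁)
  or_succ_exists : ∀ i τ₀ τ₁, (i, Sum.inr (TCond.or τ₀ τ₁)) ∈ V →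
    ∃ w, E (i, Sum.inr (TCond.or τ₀ τ₁)) w
  /-- a conjunction vertex has outgoing edges exactly to the two conjuncts -/
  and_succ : ∀ i τ₀ τ₁, (i, Sum.inr (TCond.and τ₀ τ₁)) ∈ V →
    ∀ w, E (i, Sum.inr (TCond.and τ₀ τ₁)) w ↔ (w = (i, Sum.inr τ₀) ∨ w = (i, Sum.inr τ₁))
  /-- atom vertices have no outgoing edges -/
  atom_succ : ∀ i B w, ¬ E (i, Sum.inr (TCond.atom B)) w
  /-- there is no vertex `⟨i, B⟩` with `u i ∉ B` -/
  atom_ok : ∀ i B, (i, Sum.inr (TCond.atom B)) ∈ V → u i ∈ B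

/-- A run graph is final if on every infinite path, every state occurring infinitely
often (as the second component of vertices of the path) is recurring. -/
def RunGraph.Final {M : WAA Q A} {u : ℕ → A} (G : RunGraph M u) : Prop :=
  ∀ p : ℕ → Vert Q A, (∀ n, G.E (p n) (p (n + 1))) →
    ∀ q : Q, (∀ m, ∃ n, m ≤ n ∧ (p n).2 = Sum.inl q) → q ∈ M.recurring

/-- The suffix `u[i,ω)` is accepted from state `q` if some final run graph on `u`
contains the vertex `⟨i, q⟩`. -/
def AcceptsFrom (M : WAA Q A) (u : ℕ → A) (i : ℕ) (q : Q) : Prop :=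
  ∃ G : RunGraph M u, G.Final ∧ (i, Sum.inl q) ∈ G.V

/-- The complementary automaton: dual transition conditions, recurring and
non-recurring states exchanged. -/
def dual (M : WAA Q A) : WAA Q A where
  δ q := (M.δ q).dual
  recurring := M.recurringᶜ
  weak := by
    intro q q' h1 h2
    have mono : ∀ x y : Q, (M.δ x).dual.NextOccurs y → (M.δ x).NextOccurs y :=
      fun x y h => (TCond.dual_nextOccurs _ _).mp h
    have h1' : Relation.ReflTransGen (fun x y => (M.δ x).NextOccurs y) q q' :=
      Relation.ReflTransGen.mono mono _ _ h1
    have h2' : Relation.ReflTransGen (fun x y => (M.δ x).NextOccurs y) q' q :=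
      Relation.ReflTransGen.mono mono _ _ h2
    simpa [Set.mem_compl_iff] using not_congr (M.weak q q' h1' h2')

end WAA

/-!
Acceptance by `M` and acceptance by `M.dual` are the two sides of a game on the vertices of run
graphs: a set of vertices supports a vertex for `M` iff its complement does not support the dual
vertex for `M.dual`.

If both sides accepted `⟨i, q⟩`, their run graphs would share an infinite path, and a state visited
infinitely often along it would be both recurring and non-recurring.

Conversely, fix maximal final run graphs `G` of `M` and `G'` of `M.dual`. By maximality each
contains every vertex that it supports, so the vertices missed by both support themselves, relative
to `G` for `M` and relative to `G'` for `M.dual`. By induction along the order on strongly connected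
components, such vertices above a state `q` can carry only states of the component of `q`. If that
component is recurring, adding these vertices to `G` gives a larger final run graph, and otherwise
adding their duals to `G'` does; hence there are none.
-/

open Filter

theorem wellFounded_reflTransGen_strict {α : Type*} [Finite α] (r : α → α → Prop) :
    WellFounded fun b a => Relation.ReflTransGen r a b ∧ ¬ Relation.ReflTransGen r b a := by
  let _ : Preorder α :=
    { le := fun b a => Relation.ReflTransGen r a b
      le_refl := fun _ => .refl
      le_trans := fun _ _ _ hba hcb => hcb.trans hba }
  exact wellFounded_lt (α := α)

theorem exists_infinite_path {α : Type*} {r : α → α → Prop} {P : α → Prop}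
    (hstep : ∀ a, P a → ∃ b, r a b ∧ P b) {a : α} (ha : P a) :
    ∃ p : ℕ → α, ∀ n, r (p n) (p (n + 1)) := by
  choose next hr hP using hstep
  let step : Subtype P → Subtype P := fun x => ⟨next x x.2, hP x x.2⟩
  refine ⟨fun n => (step^[n] ⟨a, ha⟩).1, fun n => ?_⟩
  simpa only [Function.iterate_succ_apply'] using hr _ (step^[n] ⟨a, ha⟩).2

namespace TCond

variable {Q A : Type*}

theorem dual_dual (τ : TCond Q A) : τ.dual.dual = τ := by
  induction τ <;> simp [dual, *]

theorem Subf.dual {χ τ : TCond Q A} (h : Subf χ τ) : Subf χ.dual τ.dual := by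
  induction h with
  | refl => exact .refl _
  | orL _ ih => exact .andL ih
  | orR _ ih => exact .andR ih
  | andL _ ih => exact .orL ih
  | andR _ ih => exact .orR ih

theorem Subf.nextOccurs {χ τ : TCond Q A} {q : Q} (h : Subf χ τ) (hq : χ.NextOccurs q) :
    τ.NextOccurs q := by
  induction h with
  | refl => exact hq
  | orL _ ih | andL _ ih => exact Or.inl ih
  | orR _ ih | andR _ ih => exact Or.inr ih

theorem Subf.trans {ψ χ τ : TCond Q A} (hψ : Subf ψ χ) (hχ : Subf χ τ) : Subf ψ τ := by
  induction hχ with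
  | refl => exact hψ
  | orL _ ih => exact .orL ih
  | orR _ ih => exact .orR ih
  | andL _ ih => exact .andL ih
  | andR _ ih => exact .andR ih

end TCond

namespace WAA

variable {Q A : Type*} {M : WAA Q A} {u : ℕ → A} {S : Set Q} {T T' : Set (Vert Q A)}
  {v w : Vert Q A}

theorem dual_dual (M : WAA Q A) : M.dual.dual = M := by
  cases M
  simp [dual, TCond.dual_dual]

theorem edge_dual (M : WAA Q A) : M.dual.Edge = M.Edge := by
  ext q r
  exact TCond.dual_nextOccurs (M.δ q) r

/-- Reachability in the transition graph. -/
abbrev Reach (M : WAA Q A) : Q → Q → Prop := Relation.ReflTransGen M.Edge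

/-- The vertex of run graphs of the complementary automaton that corresponds to a given vertex. -/
def dualVert (v : Vert Q A) : Vert Q A := (v.1, v.2.map id TCond.dual)

theorem dualVert_dualVert (v : Vert Q A) : dualVert (dualVert v) = v := by
  rcases v with ⟨i, q | τ⟩
  · rfl
  · exact congrArg (fun χ => (i, Sum.inr χ)) τ.dual_dual

/-- The vertices a run graph of `M` may use that lie over the set of states `S`: the states in `S`
and the subformulas of their transition conditions, at arbitrary positions. -/
def vertsOver (M : WAA Q A) (S : Set Q) : Set (Vert Q A) :=
  {v | v.2.elim (· ∈ S) fun τ => ∃ q ∈ S, τ.Subf (M.δ q)}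

theorem vertsOver_mono (M : WAA Q A) : Monotone M.vertsOver := by
  rintro S S' hS ⟨i, q | τ⟩ hv
  · exact hS hv
  · obtain ⟨q, hq, hτ⟩ := hv
    exact ⟨q, hS hq, hτ⟩

theorem dualVert_mem_vertsOver (hv : v ∈ M.vertsOver S) :
    dualVert v ∈ M.dual.vertsOver S := by
  rcases v with ⟨i, q | τ⟩
  · exact hv
  · obtain ⟨q, hq, hτ⟩ := hv
    exact ⟨q, hq, hτ.dual⟩

/-- The possible targets of an edge leaving a vertex of a run graph of `M`. -/
def succs (M : WAA Q A) : Vert Q A → Set (Vert Q A)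
  | (i, .inl q) => {(i, .inr (M.δ q))}
  | (_, .inr (.atom _)) => ∅
  | (i, .inr (.next q)) => {(i + 1, .inl q)}
  | (i, .inr (.or τ₀ τ₁)) => {(i, .inr τ₀), (i, .inr τ₁)}
  | (i, .inr (.and τ₀ τ₁)) => {(i, .inr τ₀), (i, .inr τ₁)}

/-- The set `T` contains enough successors of the vertex for it to occur in a run graph of `M`
on `u`. -/
def Supported (M : WAA Q A) (u : ℕ → A) (T : Set (Vert Q A)) : Vert Q A → Prop
  | (i, .inl q) => (i, .inr (M.δ q)) ∈ T
  | (i, .inr (.atom B)) => u i ∈ B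
  | (i, .inr (.next q)) => (i + 1, .inl q) ∈ T
  | (i, .inr (.or τ₀ τ₁)) => (i, .inr τ₀) ∈ T ∨ (i, .inr τ₁) ∈ T
  | (i, .inr (.and τ₀ τ₁)) => (i, .inr τ₀) ∈ T ∧ (i, .inr τ₁) ∈ T

theorem succs_subset_vertsOver (hS : ∀ q ∈ S, ∀ r, M.Edge q r → r ∈ S)
    (hv : v ∈ M.vertsOver S) : M.succs v ⊆ M.vertsOver S := by
  rcases v with ⟨i, q | τ⟩
  · rintro _ rfl
    exact ⟨q, hv, .refl _⟩
  · obtain ⟨q, hq, hτ⟩ := hv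
    cases τ with
    | atom B => exact Set.empty_subset _
    | next r =>
      rintro _ rfl
      exact hS q hq r (hτ.nextOccurs rfl)
    | or τ₀ τ₁ =>
      rintro _ (rfl | rfl)
      · exact ⟨q, hq, (TCond.Subf.orL (.refl τ₀)).trans hτ⟩
      · exact ⟨q, hq, (TCond.Subf.orR (.refl τ₁)).trans hτ⟩
    | and τ₀ τ₁ =>
      rintro _ (rfl | rfl)
      · exact ⟨q, hq, (TCond.Subf.andL (.refl τ₀)).trans hτ⟩
      · exact ⟨q, hq, (TCond.Subf.andR (.refl τ₁)).trans hτ⟩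

theorem Supported.of_inter_succs_subset (h : M.Supported u T v) (hT : T ∩ M.succs v ⊆ T') :
    M.Supported u T' v := by
  rcases v with ⟨i, q | B | q | ⟨τ₀, τ₁⟩ | ⟨τ₀, τ₁⟩⟩
  · exact hT ⟨h, rfl⟩
  · exact h
  · exact hT ⟨h, rfl⟩
  · exact h.imp (fun h₀ => hT ⟨h₀, .inl rfl⟩) (fun h₁ => hT ⟨h₁, .inr rfl⟩)
  · exact h.imp (fun h₀ => hT ⟨h₀, .inl rfl⟩) (fun h₁ => hT ⟨h₁, .inr rfl⟩)

theorem Supported.mono (h : M.Supported u T v) (hT : T ⊆ T') : M.Supported u T' v :=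
  h.of_inter_succs_subset (Set.inter_subset_left.trans hT)

theorem supported_dual_iff :
    M.dual.Supported u T (dualVert v) ↔ ¬ M.Supported u {w | dualVert w ∉ T} v := by
  rcases v with ⟨i, q | B | q | ⟨τ₀, τ₁⟩ | ⟨τ₀, τ₁⟩⟩
  · exact not_not.symm
  · exact Iff.rfl
  · exact not_not.symm
  · exact and_iff_not_or_not
  · exact or_iff_not_and_not

theorem exists_state_of_path {p : ℕ → Vert Q A} (hp : ∀ n, p (n + 1) ∈ M.succs (p n)) (m : ℕ) :
    ∃ n ≥ m, ∃ q, (p n).2 = .inl q := by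
  rcases hm : p m with ⟨i, q | τ⟩
  · exact ⟨m, le_rfl, q, by rw [hm]⟩
  have hstep := hp m
  rw [hm] at hstep
  induction τ generalizing m with
  | atom B => exact hstep.elim
  | next q => exact ⟨m + 1, m.le_succ, q, congrArg Prod.snd hstep⟩
  | or τ₀ τ₁ ih₀ ih₁ | and τ₀ τ₁ ih₀ ih₁ =>
    have hnext := hp (m + 1)
    rcases hstep with h | h <;> rw [h] at hnext
    · obtain ⟨n, hn, hq⟩ := ih₀ (m + 1) h hnext
      exact ⟨n, m.le_succ.trans hn, hq⟩
    · obtain ⟨n, hn, hq⟩ := ih₁ (m + 1) h hnext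
      exact ⟨n, m.le_succ.trans hn, hq⟩

theorem exists_frequently_state [Finite Q] {p : ℕ → Vert Q A}
    (hp : ∀ n, p (n + 1) ∈ M.succs (p n)) : ∃ q, ∃ᶠ n in atTop, (p n).2 = .inl q := by
  by_contra! hrare
  obtain ⟨m, hm⟩ := eventually_atTop.1 (eventually_all.2 hrare)
  obtain ⟨n, hn, q, hq⟩ := exists_state_of_path hp m
  exact hm n hn q hq

/-- The acceptance condition on a path: all states visited infinitely often are recurring. -/
def RecurringPath (M : WAA Q A) (p : ℕ → Vert Q A) : Prop :=
  ∀ q, (∃ᶠ n in atTop, (p n).2 = .inl q) → q ∈ M.recurring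

theorem RecurringPath.of_shift {p : ℕ → Vert Q A} (k : ℕ)
    (h : M.RecurringPath fun n => p (n + k)) : M.RecurringPath p := by
  intro q hq
  rw [← map_add_atTop_eq_nat k, frequently_map] at hq
  exact h q hq

theorem recurringPath_of_visited {p : ℕ → Vert Q A}
    (h : ∀ n q, (p n).2 = .inl q → q ∈ M.recurring) : M.RecurringPath p := by
  intro q hq
  obtain ⟨n, hn⟩ := hq.exists
  exact h n q hn

namespace RunGraph

variable {G G' : RunGraph M u}

theorem final_iff :
    G.Final ↔ ∀ p : ℕ → Vert Q A, (∀ n, G.E (p n) (p (n + 1))) → M.RecurringPath p := by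
  simp only [Final, RecurringPath, frequently_atTop]

theorem mem_succs (h : G.E v w) : w ∈ M.succs v := by
  have hv := (G.edge_mem h).1
  rcases v with ⟨i, q | B | q | ⟨τ₀, τ₁⟩ | ⟨τ₀, τ₁⟩⟩
  · exact (G.state_succ i q hv w).1 h
  · exact (G.atom_succ i B w h).elim
  · exact (G.next_succ i q hv w).1 h
  · exact G.or_succ_subset i τ₀ τ₁ hv w h
  · exact (G.and_succ i τ₀ τ₁ hv w).1 h

theorem supported (hv : v ∈ G.V) : M.Supported u {w | G.E v w} v := by
  rcases v with ⟨i, q | B | q | ⟨τ₀, τ₁⟩ | ⟨τ₀, τ₁⟩⟩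
  · exact (G.state_succ i q hv _).2 rfl
  · exact G.atom_ok i B hv
  · exact (G.next_succ i q hv _).2 rfl
  · obtain ⟨w, hw⟩ := G.or_succ_exists i τ₀ τ₁ hv
    rcases G.or_succ_subset i τ₀ τ₁ hv w hw with rfl | rfl
    · exact .inl hw
    · exact .inr hw
  · exact ⟨(G.and_succ i τ₀ τ₁ hv _).2 (.inl rfl), (G.and_succ i τ₀ τ₁ hv _).2 (.inr rfl)⟩

theorem subset_vertsOver_univ (G : RunGraph M u) : G.V ⊆ M.vertsOver Set.univ := by
  rintro ⟨i, q | τ⟩ hv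
  · trivial
  · obtain ⟨q, hτ⟩ := G.cond_subf i τ hv
    exact ⟨q, trivial, hτ⟩

/-- The run graph with vertex set `V` whose edges are the pairs in `R` that run graphs allow. -/
def ofSupported (V : Set (Vert Q A)) (R : Vert Q A → Vert Q A → Prop)
    (hV : V ⊆ M.vertsOver Set.univ) (hR : ∀ v ∈ V, M.Supported u {w ∈ V | R v w} v) :
    RunGraph M u where
  V := V
  E v w := (v ∈ V ∧ w ∈ V) ∧ w ∈ M.succs v ∧ R v w
  edge_mem _ _ h := h.1
  cond_subf _ _ hv := by
    obtain ⟨q, -, hτ⟩ := hV hv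
    exact ⟨q, hτ⟩
  state_succ _ _ hv _ := by
    refine ⟨fun h => h.2.1, ?_⟩
    rintro rfl
    exact ⟨⟨hv, (hR _ hv).1⟩, rfl, (hR _ hv).2⟩
  next_succ _ _ hv _ := by
    refine ⟨fun h => h.2.1, ?_⟩
    rintro rfl
    exact ⟨⟨hv, (hR _ hv).1⟩, rfl, (hR _ hv).2⟩
  or_succ_subset _ _ _ _ _ h := h.2.1
  or_succ_exists _ _ _ hv := by
    rcases hR _ hv with h | h
    · exact ⟨_, ⟨hv, h.1⟩, .inl rfl, h.2⟩
    · exact ⟨_, ⟨hv, h.1⟩, .inr rfl, h.2⟩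
  and_succ _ _ _ hv _ := by
    refine ⟨fun h => h.2.1, ?_⟩
    rintro (rfl | rfl)
    · exact ⟨⟨hv, (hR _ hv).1.1⟩, .inl rfl, (hR _ hv).1.2⟩
    · exact ⟨⟨hv, (hR _ hv).2.1⟩, .inr rfl, (hR _ hv).2.2⟩
  atom_succ _ _ _ h := h.2.1
  atom_ok _ _ hv := hR _ hv

/-- Run graphs are ordered by extension: the larger graph has the same edges out of the vertices of
the smaller one, so that a path starting in the smaller graph stays there. -/
instance : Preorder (RunGraph M u) where
  le G G' := G.V ⊆ G'.V ∧ ∀ v ∈ G.V, ∀ w, G.E v w ↔ G'.E v w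
  le_refl _ := ⟨subset_rfl, fun _ _ _ => Iff.rfl⟩
  le_trans _ _ _ h h' :=
    ⟨h.1.trans h'.1, fun v hv w => (h.2 v hv w).trans (h'.2 v (h.1 hv) w)⟩

theorem edge_of_isChain {c : Set (RunGraph M u)} (hc : IsChain (· ≤ ·) c) (hG : G ∈ c)
    (hG' : G' ∈ c) (hv : v ∈ G.V) (h : G'.E v w) : G.E v w := by
  rcases hc.total hG hG' with hle | hle
  · exact (hle.2 v hv w).2 h
  · exact (hle.2 v (G'.edge_mem h).1 w).1 h

theorem recurringPath_of_eventually_mem (hG : G.Final) {p : ℕ → Vert Q A} {k : ℕ}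
    (hk : p k ∈ G.V) (hp : ∀ n, p n ∈ G.V → G.E (p n) (p (n + 1))) : M.RecurringPath p := by
  have hmem : ∀ n, p (n + k) ∈ G.V := by
    intro n
    induction n with
    | zero => rwa [Nat.zero_add]
    | succ n ih =>
      rw [Nat.add_right_comm]
      exact (G.edge_mem (hp _ ih)).2
  refine .of_shift k (final_iff.1 hG _ fun n => ?_)
  rw [Nat.add_right_comm]
  exact hp _ (hmem n)

theorem exists_final_ge_of_isChain {c : Set (RunGraph M u)} (hfinal : ∀ G ∈ c, G.Final)
    (hc : IsChain (· ≤ ·) c) : ∃ H : RunGraph M u, H.Final ∧ ∀ G ∈ c, G ≤ H := by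
  let H : RunGraph M u := ofSupported (⋃ G ∈ c, G.V) (fun v w => ∃ G ∈ c, G.E v w)
    (Set.iUnion₂_subset fun G _ => G.subset_vertsOver_univ) fun v hv => by
      obtain ⟨G, hG, hvG⟩ := Set.mem_iUnion₂.1 hv
      exact (G.supported hvG).mono fun w hw =>
        ⟨Set.mem_biUnion hG (G.edge_mem hw).2, G, hG, hw⟩
  have edge_of_H : ∀ G ∈ c, ∀ v ∈ G.V, ∀ w, H.E v w → G.E v w := by
    rintro G hG v hv w ⟨-, -, G', hG', h⟩
    exact edge_of_isChain hc hG hG' hv h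
  refine ⟨H, final_iff.2 fun p hp => ?_, fun G hG => ⟨Set.subset_biUnion_of_mem hG, ?_⟩⟩
  · obtain ⟨G, hG, hpG⟩ := Set.mem_iUnion₂.1 (H.edge_mem (hp 0)).1
    exact recurringPath_of_eventually_mem (hfinal G hG) hpG fun n hn => edge_of_H G hG _ hn _ (hp n)
  · refine fun v hv w => ⟨fun h => ?_, edge_of_H G hG v hv w⟩
    exact ⟨⟨Set.mem_biUnion hG hv, Set.mem_biUnion hG (G.edge_mem h).2⟩, mem_succs h, G, hG, h⟩

theorem exists_maximal_final (M : WAA Q A) (u : ℕ → A) :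
    ∃ G : RunGraph M u, Maximal Final G :=
  zorn_le₀ {G : RunGraph M u | G.Final} fun _ hfinal hc =>
    exists_final_ge_of_isChain hfinal hc

theorem subset_of_maximal_final (hG : Maximal Final G) (hT : T ⊆ M.vertsOver Set.univ)
    (hsupp : ∀ v ∈ T, M.Supported u (G.V ∪ T) v)
    (hpath : ∀ p : ℕ → Vert Q A, (∀ n, p n ∈ T \ G.V) → (∀ n, p (n + 1) ∈ M.succs (p n)) →
      M.RecurringPath p) : T ⊆ G.V := by
  let H : RunGraph M u := ofSupported (G.V ∪ T) (fun v w => v ∈ G.V → G.E v w)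
    (Set.union_subset G.subset_vertsOver_univ hT) fun v hv => by
      by_cases hvG : v ∈ G.V
      · exact (G.supported hvG).mono fun w hw => ⟨.inl (G.edge_mem hw).2, fun _ => hw⟩
      · exact (hsupp v (hv.resolve_left hvG)).mono fun w hw => ⟨hw, fun h => (hvG h).elim⟩
  have hle : G ≤ H := by
    refine ⟨Set.subset_union_left, fun v hv w => ⟨fun h => ?_, fun h => h.2.2 hv⟩⟩
    exact ⟨⟨.inl hv, .inl (G.edge_mem h).2⟩, mem_succs h, fun _ => h⟩
  have hH : H.Final := by
    refine final_iff.2 fun p hp => ?_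
    by_cases hmeet : ∃ k, p k ∈ G.V
    · obtain ⟨k, hk⟩ := hmeet
      exact recurringPath_of_eventually_mem hG.prop hk fun n => (hp n).2.2
    · push Not at hmeet
      exact hpath p (fun n => ⟨(hp n).1.1.resolve_left (hmeet n), hmeet n⟩) fun n => (hp n).2.1
  exact Set.subset_union_right.trans (hG.le_of_ge hH hle).1

end RunGraph

/-- `T` contains every vertex that it supports. -/
def SupportClosed (M : WAA Q A) (u : ℕ → A) (T : Set (Vert Q A)) : Prop :=
  ∀ v ∈ M.vertsOver Set.univ, M.Supported u T v → v ∈ T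

theorem supportClosed_of_maximal_final {G : RunGraph M u} (hG : Maximal RunGraph.Final G) :
    M.SupportClosed u G.V := by
  intro v hv hsupp
  refine RunGraph.subset_of_maximal_final hG (Set.singleton_subset_iff.2 hv) ?_ ?_ rfl
  · rintro _ rfl
    exact hsupp.mono Set.subset_union_left
  · intro p hp hsucc
    have hconst : ∀ n, p n = v := fun n => (hp n).1
    refine recurringPath_of_visited fun n q hq => ?_
    have hloop := hsucc n
    rw [hconst (n + 1), ← hconst n, show p n = ((p n).1, .inl q) from Prod.ext rfl hq] at hloop
    exact absurd (congrArg Prod.snd hloop) Sum.inl_ne_inr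

theorem SupportClosed.supported_compl (hT : M.dual.SupportClosed u T)
    (hv : v ∈ M.vertsOver Set.univ) (hvT : dualVert v ∉ T) :
    M.Supported u {w | dualVert w ∉ T} v := by
  by_contra h
  exact hvT (hT _ (dualVert_mem_vertsOver hv) (supported_dual_iff.2 h))

theorem mem_or_dualVert_mem_of_recurring {G : RunGraph M u} (hG : Maximal RunGraph.Final G)
    (hT : M.dual.SupportClosed u T) (hS : ∀ q ∈ S, ∀ r, M.Edge q r → r ∈ S)
    (hrec : ∀ q ∈ S, ∀ i, (i, .inl q) ∉ G.V → (i, .inl q) ∉ T → q ∈ M.recurring)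
    (hv : v ∈ M.vertsOver S) : v ∈ G.V ∨ dualVert v ∈ T := by
  rw [or_iff_not_imp_right]
  intro hvT
  have huniv := M.vertsOver_mono S.subset_univ
  let U : Set (Vert Q A) := {w ∈ M.vertsOver S | dualVert w ∉ T}
  suffices U ⊆ G.V from this ⟨hv, hvT⟩
  refine RunGraph.subset_of_maximal_final hG (fun w hw => huniv hw.1) ?_ ?_
  · rintro w ⟨hw, hwT⟩
    refine (hT.supported_compl (huniv hw) hwT).of_inter_succs_subset ?_
    rintro x ⟨hxT, hx⟩
    exact .inr ⟨succs_subset_vertsOver hS hw hx, hxT⟩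
  · intro p hp _
    refine recurringPath_of_visited fun n q hq => ?_
    obtain ⟨⟨hpS, hpT⟩, hpG⟩ := hp n
    rw [show p n = ((p n).1, .inl q) from Prod.ext rfl hq] at hpS hpT hpG
    exact hrec q hpS _ hpG hpT

theorem mem_or_mem_of_maximal_final [Finite Q] {G : RunGraph M u} {G' : RunGraph M.dual u}
    (hG : Maximal RunGraph.Final G) (hG' : Maximal RunGraph.Final G') (q : Q) (i : ℕ) :
    (i, .inl q) ∈ G.V ∨ (i, .inl q) ∈ G'.V := by
  induction q using (wellFounded_reflTransGen_strict M.Edge).induction generalizing i with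
  | _ q ih =>
  have same_component : ∀ r, M.Reach q r → ∀ j, (j, .inl r) ∉ G.V → (j, .inl r) ∉ G'.V →
      (q ∈ M.recurring ↔ r ∈ M.recurring) := by
    intro r hqr j hjG hjG'
    refine M.weak q r hqr ?_
    by_contra hrq
    exact (ih r ⟨hqr, hrq⟩ j).elim hjG hjG'
  by_cases hq : q ∈ M.recurring
  · exact mem_or_dualVert_mem_of_recurring (S := {r | M.Reach q r}) (v := (i, .inl q)) hG
      (supportClosed_of_maximal_final hG') (fun _ hr _ hrs => hr.tail hrs)
      (fun r hr j hjG hjG' => (same_component r hr j hjG hjG').1 hq) .refl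
  · have hclosed : M.dual.dual.SupportClosed u G.V := by
      rw [dual_dual]
      exact supportClosed_of_maximal_final hG
    refine Or.symm (mem_or_dualVert_mem_of_recurring (S := {r | M.Reach q r}) (v := (i, .inl q))
      hG' hclosed ?_ ?_ .refl)
    · rw [edge_dual]
      exact fun _ hr _ hrs => hr.tail hrs
    · exact fun r hr j hjG' hjG => (same_component r hr j hjG hjG').not.1 hq

theorem acceptsFrom_or_dual [Finite Q] (M : WAA Q A) (u : ℕ → A) (i : ℕ) (q : Q) :
    M.AcceptsFrom u i q ∨ M.dual.AcceptsFrom u i q := by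
  obtain ⟨G, hG⟩ := RunGraph.exists_maximal_final M u
  obtain ⟨G', hG'⟩ := RunGraph.exists_maximal_final M.dual u
  exact (mem_or_mem_of_maximal_final hG hG' q i).imp
    (fun h => ⟨G, hG.prop, h⟩) (fun h => ⟨G', hG'.prop, h⟩)

theorem RunGraph.exists_common_edge (G : RunGraph M u) (G' : RunGraph M.dual u) (hv : v ∈ G.V)
    (hv' : dualVert v ∈ G'.V) : ∃ w, G.E v w ∧ G'.E (dualVert v) (dualVert w) := by
  by_contra! h
  exact supported_dual_iff.1 (G'.supported hv') ((G.supported hv).mono h)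

theorem AcceptsFrom.not_dual [Finite Q] {i : ℕ} {q : Q} (h : M.AcceptsFrom u i q) :
    ¬ M.dual.AcceptsFrom u i q := by
  obtain ⟨G, hG, hq⟩ := h
  rintro ⟨G', hG', hq'⟩
  obtain ⟨p, hp⟩ := exists_infinite_path (P := fun v => v ∈ G.V ∧ dualVert v ∈ G'.V)
    (r := fun v w => G.E v w ∧ G'.E (dualVert v) (dualVert w)) (fun v ⟨hv, hv'⟩ => by
      obtain ⟨w, hw, hw'⟩ := G.exists_common_edge G' hv hv'
      exact ⟨w, ⟨hw, hw'⟩, (G.edge_mem hw).2, (G'.edge_mem hw').2⟩) ⟨hq, hq'⟩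
  obtain ⟨r, hr⟩ := exists_frequently_state fun n => RunGraph.mem_succs (hp n).1
  have hr' : ∃ᶠ n in atTop, (dualVert (p n)).2 = .inl r :=
    hr.mono fun n hn => by simp [dualVert, hn]
  exact RunGraph.final_iff.1 hG' _ (fun n => (hp n).2) r hr'
    (RunGraph.final_iff.1 hG p (fun n => (hp n).1) r hr)

end WAA

/-- complementation of weak alternating automata:
the suffix `u[i,ω)` is accepted from `q` by `M` iff it is not accepted from `q`
by the complementary automaton `M.dual`. -/
theorem weak_alternating_complementation {Q A : Type*} [Fintype Q]
    (M : WAA Q A) (q : Q) (u : ℕ → A) (i : ℕ) :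
    WAA.AcceptsFrom M u i q ↔ ¬ WAA.AcceptsFrom M.dual u i q :=
  ⟨WAA.AcceptsFrom.not_dual, (WAA.acceptsFrom_or_dual M u i q).resolve_right⟩
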